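/- (Cutting lemma for unit circles in the plane, existence part.) There exists an absolute constant C such that: for every finite set S of n ≥ 1 unit circles in ℝ² and every real number r with 1 ≤ r ≤ n, there exists a family of at most C·r² pairwise disjoint connected subsets of ℝ² whose union is all of ℝ², such that each set in the family is crossed by at most C·n/r circles of S. -/

import Mathlib

/-!
The cutting is built from levels of an arrangement of graphs of functions.

Each unit circle is split into its upper and lower arc, and each arc is extended by two rays to the
graph of a continuous function `ℝ → ℝ` (`arc`). Using a different ray slope for every circle, any
two of the `m = 2n` functions agree at no more than 18 abscissas (`arc_coincidences`). A circle
crossing a connected set has an extended arc crossing it (`exists_arc_crosses`), so it suffices to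
cut the plane for the `m` graphs (`exists_labelling`).

For the graphs, put `q = ⌈n / r⌉` and keep the levels `j + 1, j + 1 + q, j + 1 + 2q, …` only. A
coincidence of two functions lies on few levels, so averaging over the offset `j < q` yields one for
which only `O(m² / q)` coincidences lie on kept levels (`exists_offset`). Each open strip between
consecutive kept levels, and each kept level itself, is then cut by vertical walls so that fewer
than `q` coincidences on its boundary remain between consecutive walls; `O(m² / q²) = O(r²)` walls
are enough (`exists_walls`). A graph without coincidences on a kept level over an interval stays on
the same side of that level there (`side_const`). Hence over a wall-free interval, a piece of a
strip is met by at most `q` graphs passing through it at a fixed abscissa (`card_strip_le`) and by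
at most `q` others, while a piece of a level curve is crossed by at most `q` graphs.

The cells are the fibers of a labelling of the plane: a flag (inside a strip or on a level), the
index of the strip, and the position relative to the walls of that strip. Disjointness and covering
are then automatic, and only connectedness has to be verified (`isPreconnected_region`).
-/

open scoped Classical

/-- A unit circle in the Euclidean plane: the set of points at Euclidean
distance 1 from some center `c`. -/
def IsUnitCircle (σ : Set (EuclideanSpace ℝ (Fin 2))) : Prop :=
  ∃ c : EuclideanSpace ℝ (Fin 2), σ = {x | ‖x - c‖ = 1}

/-- A circle (or more generally, a set) `σ` crosses a set `Δ` if
`σ ∩ Δ ≠ ∅` and `Δ ⊄ σ`. -/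
def Crosses {α : Type*} (σ Δ : Set α) : Prop :=
  (σ ∩ Δ).Nonempty ∧ ¬ Δ ⊆ σ

/-! ### Levels of a family of graphs -/

section Levels
variable {ι : Type*} [Fintype ι]

/-- The number of graphs passing strictly below the point `(x, y)`. -/
noncomputable def cntLt (f : ι → ℝ → ℝ) (x y : ℝ) : ℕ :=
  (Finset.univ.filter fun i => f i x < y).card

/-- The number of graphs passing through or below the point `(x, y)`. -/
noncomputable def cntLe (f : ι → ℝ → ℝ) (x y : ℝ) : ℕ :=
  (Finset.univ.filter fun i => f i x ≤ y).card

/-- The number of graphs passing through the point `(x, y)`. -/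
noncomputable def cntEq (f : ι → ℝ → ℝ) (x y : ℝ) : ℕ :=
  (Finset.univ.filter fun i => f i x = y).card

/-- `(x, y)` lies on the `k`-th level: `y` is the `k`-th smallest of the values `f i x`, counted with
multiplicity and starting from `k = 1`. There is no such point when `k = 0` or `k` exceeds the
number of functions. -/
def OnLevel (f : ι → ℝ → ℝ) (k : ℕ) (x y : ℝ) : Prop :=
  cntLt f x y < k ∧ k ≤ cntLe f x y

lemma cntLt_add_cntEq (f : ι → ℝ → ℝ) (x y : ℝ) :
    cntLt f x y + cntEq f x y = cntLe f x y := by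
  unfold cntLt cntEq cntLe
  rw [← Finset.card_union_of_disjoint]
  · congr 1
    ext i
    simp [le_iff_lt_or_eq]
  · rw [Finset.disjoint_filter]
    intro i _ h1 h2
    exact h1.ne h2

lemma cntLe_le_cntLt (f : ι → ℝ → ℝ) (x : ℝ) {y y' : ℝ} (h : y < y') :
    cntLe f x y ≤ cntLt f x y' := by
  apply Finset.card_le_card
  intro i
  simp only [Finset.mem_filter, Finset.mem_univ, true_and]
  intro hi
  exact hi.trans_lt h

lemma cntLt_le_cntLe (f : ι → ℝ → ℝ) (x y : ℝ) : cntLt f x y ≤ cntLe f x y := by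
  rw [← cntLt_add_cntEq]; omega

lemma cntLt_mono (f : ι → ℝ → ℝ) (x : ℝ) {y y' : ℝ} (h : y ≤ y') :
    cntLt f x y ≤ cntLt f x y' := by
  rcases h.eq_or_lt with rfl | h
  · rfl
  · exact (cntLt_le_cntLe f x y).trans (cntLe_le_cntLt f x h)

lemma cntLe_mono (f : ι → ℝ → ℝ) (x : ℝ) {y y' : ℝ} (h : y ≤ y') :
    cntLe f x y ≤ cntLe f x y' := by
  rcases h.eq_or_lt with rfl | h
  · rfl
  · exact (cntLe_le_cntLt f x h).trans (cntLt_le_cntLe f x y')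

lemma cntLe_le_card (f : ι → ℝ → ℝ) (x y : ℝ) : cntLe f x y ≤ Fintype.card ι :=
  Finset.card_le_univ _

lemma isOpen_le_cntLt {f : ι → ℝ → ℝ} (hf : ∀ i, Continuous (f i)) (k : ℕ) :
    IsOpen {p : ℝ × ℝ | k ≤ cntLt f p.1 p.2} := by
  have : {p : ℝ × ℝ | k ≤ cntLt f p.1 p.2} =
      ⋃ T : {T : Finset ι // k ≤ T.card}, ⋂ i ∈ T.1, {p : ℝ × ℝ | f i p.1 < p.2} := by
    ext p
    simp only [Set.mem_ofPred_eq, Set.mem_iUnion, Set.mem_iInter]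
    constructor
    · intro h
      exact ⟨⟨_, h⟩, fun i hi => (Finset.mem_filter.1 hi).2⟩
    · rintro ⟨⟨T, hT⟩, h⟩
      exact hT.trans (Finset.card_le_card fun i hi => Finset.mem_filter.2 ⟨Finset.mem_univ _, h i hi⟩)
  rw [this]
  refine isOpen_iUnion fun T => isOpen_biInter_finset fun i _ => ?_
  exact isOpen_lt ((hf i).comp continuous_fst) continuous_snd

lemma isOpen_cntLe_lt {f : ι → ℝ → ℝ} (hf : ∀ i, Continuous (f i)) (k : ℕ) :
    IsOpen {p : ℝ × ℝ | cntLe f p.1 p.2 < k} := by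
  rw [← isClosed_compl_iff]
  have : {p : ℝ × ℝ | cntLe f p.1 p.2 < k}ᶜ =
      ⋃ T : {T : Finset ι // k ≤ T.card}, ⋂ i ∈ T.1, {p : ℝ × ℝ | f i p.1 ≤ p.2} := by
    ext p
    simp only [Set.mem_compl_iff, not_lt, Set.mem_ofPred_eq, Set.mem_iUnion, Set.mem_iInter]
    constructor
    · intro h
      exact ⟨⟨_, h⟩, fun i hi => (Finset.mem_filter.1 hi).2⟩
    · rintro ⟨⟨T, hT⟩, h⟩
      exact hT.trans (Finset.card_le_card fun i hi => Finset.mem_filter.2 ⟨Finset.mem_univ _, h i hi⟩)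
  rw [this]
  refine isClosed_iUnion_of_finite fun T => isClosed_biInter fun i _ => ?_
  exact isClosed_le ((hf i).comp continuous_fst) continuous_snd

lemma OnLevel.unique {f : ι → ℝ → ℝ} {k : ℕ} {x y y' : ℝ} (h : OnLevel f k x y)
    (h' : OnLevel f k x y') : y = y' := by
  rcases lt_trichotomy y y' with hlt | rfl | hlt
  · have := cntLe_le_cntLt f x hlt
    have := h.2; have := h'.1; omega
  · rfl
  · have := cntLe_le_cntLt f x hlt
    have := h'.2; have := h.1; omega

/-- The `k`-th level is the graph of a continuous function, namely of the minimum over all `k`-element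
sets `T` of `max_{i ∈ T} f i`. -/
lemma exists_level {f : ι → ℝ → ℝ} (hf : ∀ i, Continuous (f i)) {k : ℕ} (hk : 1 ≤ k)
    (hk' : k ≤ Fintype.card ι) :
    ∃ L : ℝ → ℝ, Continuous L ∧ ∀ x, OnLevel f k x (L x) := by
  have hne : (Finset.powersetCard k (Finset.univ : Finset ι)).Nonempty := by
    rw [Finset.powersetCard_nonempty]; simpa using hk'
  have hT : ∀ T : {T // T ∈ Finset.powersetCard k (Finset.univ : Finset ι)}, T.1.Nonempty := by
    intro T
    rw [← Finset.card_pos, (Finset.mem_powersetCard.1 T.2).2]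
    exact hk
  refine ⟨fun x => (Finset.powersetCard k (Finset.univ : Finset ι)).attach.inf'
    (Finset.attach_nonempty_iff.2 hne) (fun T => T.1.sup' (hT T) fun i => f i x), ?_, ?_⟩
  · refine Continuous.finset_inf'_apply _ fun T _ => ?_
    exact Continuous.finset_sup'_apply _ fun i _ => hf i
  · intro x
    constructor
    · rw [← not_le]
      intro h
      obtain ⟨T, hTs, hTc⟩ := Finset.exists_subset_card_eq h
      have hmem : T ∈ Finset.powersetCard k (Finset.univ : Finset ι) :=
        Finset.mem_powersetCard.2 ⟨Finset.subset_univ _, hTc⟩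
      have h1 := Finset.inf'_le (s := (Finset.powersetCard k (Finset.univ : Finset ι)).attach)
        (fun T => T.1.sup' (hT T) fun i => f i x) (Finset.mem_attach _ ⟨T, hmem⟩)
      obtain ⟨i, hi, hi'⟩ := Finset.exists_mem_eq_sup' (hT ⟨T, hmem⟩) fun i => f i x
      have := (Finset.mem_filter.1 (hTs hi)).2
      simp only at h1 hi'
      rw [hi'] at h1
      linarith
    · obtain ⟨T, _, hT'⟩ := Finset.exists_mem_eq_inf'
        (Finset.attach_nonempty_iff.2 hne) (fun T => T.1.sup' (hT T) fun i => f i x)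
      beta_reduce
      rw [hT']
      conv_lhs => rw [← (Finset.mem_powersetCard.1 T.2).2]
      apply Finset.card_le_card
      intro i hi
      refine Finset.mem_filter.2 ⟨Finset.mem_univ _, ?_⟩
      exact Finset.le_sup' (fun i => f i x) hi

/-- Over a single abscissa, at most `k - k'` graphs pass strictly between the levels `k'` and `k`. -/
lemma card_strip_le (f : ι → ℝ → ℝ) (k' k : ℕ) (x : ℝ) :
    (Finset.univ.filter fun i => k' ≤ cntLt f x (f i x) ∧ cntLe f x (f i x) < k).card ≤ k - k' := by
  set I := Finset.univ.filter fun i => k' ≤ cntLt f x (f i x) ∧ cntLe f x (f i x) < k with hI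
  rcases I.eq_empty_or_nonempty with h | h
  · simp [h]
  obtain ⟨i₀, hi₀, h₀⟩ := Finset.exists_min_image I (fun i => f i x) h
  obtain ⟨i₁, hi₁, h₁⟩ := Finset.exists_max_image I (fun i => f i x) h
  have h0 := (Finset.mem_filter.1 hi₀).2.1
  have h1 := (Finset.mem_filter.1 hi₁).2.2
  have : I.card + cntLt f x (f i₀ x) ≤ cntLe f x (f i₁ x) := by
    unfold cntLt cntLe
    rw [← Finset.card_union_of_disjoint]
    · apply Finset.card_le_card
      intro i hi
      refine Finset.mem_filter.2 ⟨Finset.mem_univ _, ?_⟩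
      rcases Finset.mem_union.1 hi with hi | hi
      · exact h₁ i hi
      · exact (Finset.mem_filter.1 hi).2.le.trans (h₁ i₀ hi₀)
    · rw [Finset.disjoint_left]
      intro i hi hi'
      exact absurd (Finset.mem_filter.1 hi').2 (not_lt.2 (h₀ i hi))
  omega

/-- If `f i` coincides with no other function at the points of the `k`-th level over a connected set
`X`, then over `X` it stays above, on, or below that level throughout: where it is alone on the
level, its rank is locally constant. -/
lemma side_const {f : ι → ℝ → ℝ} (hf : ∀ i, Continuous (f i)) {X : Set ℝ}
    (hX : IsPreconnected X) (k : ℕ) (i : ι)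
    (hno : ∀ x ∈ X, OnLevel f k x (f i x) → ∀ j, j ≠ i → f j x ≠ f i x)
    {x x' : ℝ} (hx : x ∈ X) (hx' : x' ∈ X) :
    (k ≤ cntLt f x (f i x) ↔ k ≤ cntLt f x' (f i x')) ∧
      (cntLe f x (f i x) < k ↔ cntLe f x' (f i x') < k) := by
  let g : ℝ → Prop × Prop := fun x => (k ≤ cntLt f x (f i x), cntLe f x (f i x) < k)
  have hcont : Continuous fun x => (x, f i x) := continuous_id.prodMk (hf i)
  have key : ∀ x ∈ X, ∀ᶠ z in nhds x, g z = g x := by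
    intro x hx
    by_cases h1 : k ≤ cntLt f x (f i x)
    · have h2 : ∀ᶠ z in nhds x, k ≤ cntLt f z (f i z) :=
        ((isOpen_le_cntLt hf k).preimage hcont).mem_nhds h1
      filter_upwards [h2] with z hz
      have a1 := cntLt_le_cntLe f x (f i x)
      have a2 := cntLt_le_cntLe f z (f i z)
      simp only [g, Prod.mk.injEq, eq_iff_iff]
      omega
    by_cases h3 : cntLe f x (f i x) < k
    · have h2 : ∀ᶠ z in nhds x, cntLe f z (f i z) < k :=
        ((isOpen_cntLe_lt hf k).preimage hcont).mem_nhds h3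
      filter_upwards [h2] with z hz
      have a1 := cntLt_le_cntLe f x (f i x)
      have a2 := cntLt_le_cntLe f z (f i z)
      simp only [g, Prod.mk.injEq, eq_iff_iff]
      omega
    · have hne := hno x hx ⟨not_le.1 h1, not_lt.1 h3⟩
      have hev : ∀ j, ∀ᶠ z in nhds x, (f j z < f i z ↔ f j x < f i x) ∧
          (f j z ≤ f i z ↔ f j x ≤ f i x) := by
        intro j
        by_cases hj : j = i
        · subst hj; simp
        rcases lt_or_gt_of_ne (hne j hj) with hlt | hlt
        · filter_upwards [(isOpen_lt (hf j) (hf i)).mem_nhds hlt] with z hz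
          have hz' : f j z < f i z := hz
          simp [hz', hlt, hz'.le, hlt.le]
        · filter_upwards [(isOpen_lt (hf i) (hf j)).mem_nhds hlt] with z hz
          have hz' : f i z < f j z := hz
          simp [hz'.not_ge, hlt.not_ge, hz'.not_gt, hlt.not_gt]
      filter_upwards [Filter.eventually_all.2 hev] with z hz
      have e1 : cntLt f z (f i z) = cntLt f x (f i x) := by
        unfold cntLt; congr 1; ext j; simp [(hz j).1]
      have e2 : cntLe f z (f i z) = cntLe f x (f i x) := by
        unfold cntLe; congr 1; ext j; simp [(hz j).2]
      simp [g, e1, e2]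
  let _ : TopologicalSpace (Prop × Prop) := ⊥
  have : DiscreteTopology (Prop × Prop) := ⟨rfl⟩
  have hc : ContinuousOn g X := by
    intro z hz
    apply ContinuousAt.continuousWithinAt
    refine (continuousAt_const (y := g z)).congr ?_
    filter_upwards [key z hz] with a ha
    exact ha.symm
  have := hX.constant hc hx hx'
  simpa [g] using this

/-- An open set with nonempty, order-connected vertical slices over a connected base is connected. -/
lemma isPreconnected_region {X : Set ℝ} (hX : IsPreconnected X) {O : Set (ℝ × ℝ)}
    (hO : IsOpen O) (hne : ∀ x ∈ X, ∃ y, (x, y) ∈ O)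
    (hc : ∀ x ∈ X, Set.OrdConnected {y | (x, y) ∈ O}) :
    IsPreconnected {p : ℝ × ℝ | p.1 ∈ X ∧ p ∈ O} := by
  rintro U V hU hV hUV ⟨p, ⟨hpX, hpO⟩, hpU⟩ ⟨p', ⟨hpX', hpO'⟩, hpV⟩
  have hU' := isOpenMap_fst _ (hO.inter hU)
  have hV' := isOpenMap_fst _ (hO.inter hV)
  obtain ⟨x, hxX, ⟨⟨x1, y⟩, ⟨hyO, hyU⟩, rfl⟩, ⟨⟨x2, y'⟩, ⟨hyO', hyV⟩, h2⟩⟩ :=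
    hX _ _ hU' hV' (by
      intro x hx
      obtain ⟨y, hy⟩ := hne x hx
      rcases hUV ⟨hx, hy⟩ with h | h
      · exact Or.inl ⟨_, ⟨hy, h⟩, rfl⟩
      · exact Or.inr ⟨_, ⟨hy, h⟩, rfl⟩)
      ⟨p.1, hpX, p, ⟨hpO, hpU⟩, rfl⟩ ⟨p'.1, hpX', p', ⟨hpO', hpV⟩, rfl⟩
  simp only at hxX h2
  subst h2
  have hcx : Continuous fun y : ℝ => (x2, y) := by fun_prop
  obtain ⟨z, hz, hz1, hz2⟩ := (hc x2 hxX).isPreconnected _ _ (hU.preimage hcx) (hV.preimage hcx)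
    (fun y hy => hUV ⟨hxX, hy⟩) ⟨y, hyO, hyU⟩ ⟨y', hyO', hyV⟩
  exact ⟨(x2, z), ⟨hxX, hz⟩, hz1, hz2⟩

end Levels

/-! ### Vertical walls -/

/-- Points of `B` carry weights `w`. A set `W` of at most `(∑ w) / q` walls suffices so that every
interval avoiding `W` carries weight less than `q`: put a wall wherever the prefix sum of the
weights passes a multiple of `q`. -/
lemma exists_walls (B : Finset ℝ) (w : ℝ → ℕ) {q : ℕ} (hq : 0 < q) :
    ∃ W : Finset ℝ, W.card * q ≤ ∑ x ∈ B, w x ∧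
      ∀ X : Set ℝ, X.OrdConnected → (∀ x ∈ X, x ∉ W) → ∑ x ∈ B.filter (· ∈ X), w x < q := by
  let P : ℝ → ℕ := fun x => ∑ z ∈ B.filter (· ≤ x), w z
  let P' : ℝ → ℕ := fun x => ∑ z ∈ B.filter (· < x), w z
  have hPP' : ∀ x z, x < z → P x ≤ P' z := by
    intro x z h
    apply Finset.sum_le_sum_of_subset
    intro t ht
    simp only [Finset.mem_filter] at ht ⊢
    exact ⟨ht.1, ht.2.trans_lt h⟩
  refine ⟨B.filter fun x => P' x / q < P x / q, ?_, ?_⟩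
  · rw [← Nat.le_div_iff_mul_le hq]
    calc _ ≤ (Finset.Ioc 0 ((∑ x ∈ B, w x) / q)).card := ?_
      _ = _ := by simp
    apply Finset.card_le_card_of_injOn (fun x => P x / q)
    · intro x hx
      have hx := (Finset.mem_filter.1 hx).2
      simp only [Finset.coe_Ioc, Set.mem_Ioc]
      refine ⟨(Nat.zero_le _).trans_lt hx, Nat.div_le_div_right ?_⟩
      exact Finset.sum_le_sum_of_subset (Finset.filter_subset _ _)
    · have : StrictMonoOn (fun x => P x / q)
          (B.filter fun x => P' x / q < P x / q : Finset ℝ) := by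
        intro x _ z hz hxz
        have hz := (Finset.mem_filter.1 hz).2
        exact (Nat.div_le_div_right (hPP' x z hxz)).trans_lt hz
      exact this.injOn
  · intro X hX hXW
    by_contra hcon
    rw [not_lt] at hcon
    set Y := B.filter (· ∈ X) with hY
    have hYne : Y.Nonempty := by
      rw [Finset.nonempty_iff_ne_empty]
      intro h
      simp [h] at hcon
      omega
    obtain ⟨u, huY, hu⟩ := Finset.exists_min_image Y id hYne
    obtain ⟨v, hvY, hv⟩ := Finset.exists_max_image Y id hYne
    simp only [id] at hu hv
    have huB := (Finset.mem_filter.1 huY)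
    have hvB := (Finset.mem_filter.1 hvY)
    have hsum : P' u + q ≤ P v := by
      refine (Nat.add_le_add_left hcon _).trans ?_
      rw [← Finset.sum_union]
      · apply Finset.sum_le_sum_of_subset
        intro t ht
        rcases Finset.mem_union.1 ht with ht | ht
        · have := Finset.mem_filter.1 ht
          exact Finset.mem_filter.2 ⟨this.1, (this.2.trans_le (hu v hvY)).le⟩
        · exact Finset.mem_filter.2 ⟨(Finset.mem_filter.1 ht).1, hv t ht⟩
      · rw [Finset.disjoint_left]
        intro t ht ht'
        exact absurd (Finset.mem_filter.1 ht).2 (not_lt.2 (hu t ht'))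
    have hdiv : P' u / q < P v / q := by
      calc P' u / q < P' u / q + 1 := Nat.lt_succ_self _
        _ = (P' u + q) / q := (Nat.add_div_right _ hq).symm
        _ ≤ _ := Nat.div_le_div_right hsum
    -- The first point of `Y` at which the prefix sum has passed a new multiple of `q` is a wall.
    obtain ⟨z, hzZ, hz⟩ := Finset.exists_min_image (Y.filter fun z => P' u / q < P z / q) id
      ⟨v, Finset.mem_filter.2 ⟨hvY, hdiv⟩⟩
    obtain ⟨hzY, hzlt⟩ := Finset.mem_filter.1 hzZ
    have hzB := Finset.mem_filter.1 hzY
    have hzW := hXW z hzB.2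
    rw [Finset.mem_filter, not_and, not_lt] at hzW
    have hzW := hzW hzB.1
    rcases (hu z hzY).eq_or_lt with rfl | huz
    · omega
    obtain ⟨t, htB, ht⟩ := Finset.exists_max_image (B.filter (· < z)) id
      ⟨u, Finset.mem_filter.2 ⟨huB.1, huz⟩⟩
    simp only [id] at ht hz
    have htB := Finset.mem_filter.1 htB
    have hPt : P t = P' z := by
      apply le_antisymm (hPP' t z htB.2)
      apply Finset.sum_le_sum_of_subset
      intro a ha
      exact Finset.mem_filter.2 ⟨(Finset.mem_filter.1 ha).1, ht a ha⟩
    have htX : t ∈ X := hX.out huB.2 hzB.2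
      ⟨ht u (Finset.mem_filter.2 ⟨huB.1, huz⟩), htB.2.le⟩
    have := hz t (Finset.mem_filter.2 ⟨Finset.mem_filter.2 ⟨htB.1, htX⟩, by rw [hPt]; omega⟩)
    linarith [htB.2]

/-- The position of `x` relative to the walls `W`: `2k` if `x` lies strictly between the `k`-th and
the `(k + 1)`-st wall, and `2k - 1` if `x` is the `k`-th wall. -/
noncomputable def loc (W : Finset ℝ) (x : ℝ) : ℕ :=
  (W.filter (· < x)).card + (W.filter (· ≤ x)).card

lemma loc_le (W : Finset ℝ) (x : ℝ) : loc W x ≤ 2 * W.card := by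
  have h1 := Finset.card_filter_le W (· < x)
  have h2 := Finset.card_filter_le W (· ≤ x)
  unfold loc; omega

lemma loc_mono (W : Finset ℝ) : Monotone (loc W) := by
  intro x z h
  apply Nat.add_le_add <;> apply Finset.card_le_card <;> intro t ht <;>
    simp only [Finset.mem_filter] at ht ⊢
  · exact ⟨ht.1, ht.2.trans_le h⟩
  · exact ⟨ht.1, ht.2.trans h⟩

lemma ordConnected_loc (W : Finset ℝ) (c : ℕ) : Set.OrdConnected {x | loc W x = c} := by
  constructor
  intro x hx z hz t ht
  have h1 := loc_mono W ht.1
  have h2 := loc_mono W ht.2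
  simp only [Set.mem_ofPred_eq] at *
  omega

lemma loc_lt {W : Finset ℝ} {x z : ℝ} (h : x < z) (hW : x ∈ W ∨ z ∈ W) : loc W x < loc W z := by
  have a1 : (W.filter (· < x)).card ≤ (W.filter (· ≤ x)).card :=
    Finset.card_le_card fun t ht => by
      simp only [Finset.mem_filter] at ht ⊢; exact ⟨ht.1, ht.2.le⟩
  have a2 : (W.filter (· ≤ x)).card ≤ (W.filter (· < z)).card :=
    Finset.card_le_card fun t ht => by
      simp only [Finset.mem_filter] at ht ⊢; exact ⟨ht.1, ht.2.trans_lt h⟩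
  have a3 : (W.filter (· < z)).card ≤ (W.filter (· ≤ z)).card :=
    Finset.card_le_card fun t ht => by
      simp only [Finset.mem_filter] at ht ⊢; exact ⟨ht.1, ht.2.le⟩
  rcases hW with hW | hW
  · have : (W.filter (· < x)).card < (W.filter (· ≤ x)).card := by
      apply Finset.card_lt_card
      rw [Finset.ssubset_iff_of_subset
        (fun t ht => by simp only [Finset.mem_filter] at ht ⊢; exact ⟨ht.1, ht.2.le⟩)]
      exact ⟨x, by simp [hW], by simp⟩
    unfold loc; omega
  · have : (W.filter (· < z)).card < (W.filter (· ≤ z)).card := by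
      apply Finset.card_lt_card
      rw [Finset.ssubset_iff_of_subset
        (fun t ht => by simp only [Finset.mem_filter] at ht ⊢; exact ⟨ht.1, ht.2.le⟩)]
      exact ⟨z, by simp [hW], by simp⟩
    unfold loc; omega

lemma loc_eq_of_mem {W : Finset ℝ} {x z : ℝ} (hx : x ∈ W) (h : loc W x = loc W z) : x = z := by
  rcases lt_trichotomy x z with hlt | rfl | hlt
  · have := loc_lt hlt (Or.inl hx); omega
  · rfl
  · have := loc_lt hlt (Or.inr hx); omega

/-! ### Cutting the arrangement of graphs -/

section Cutting
variable {ι : Type*} [Fintype ι]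

/-- The functions that coincide with another function at `x`, at a point of one of the two levels
`k - q` and `k` bounding a strip. For `k ≤ q` the lower level is `0`, on which there are no
points. -/
noncomputable def events (f : ι → ℝ → ℝ) (q k : ℕ) (x : ℝ) : Finset ι :=
  Finset.univ.filter fun i => (∃ j, j ≠ i ∧ f j x = f i x) ∧
    (OnLevel f k x (f i x) ∨ OnLevel f (k - q) x (f i x))

lemma mul_add_injOn {q a b c d : ℕ} (ha : a < q) (hc : c < q)
    (h : a + 1 + b * q = c + 1 + d * q) : a = c ∧ b = d := by
  have h' : a + q * b = c + q * d := by linarith [mul_comm b q, mul_comm d q]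
  have h1 := congrArg (· % q) h'
  simp only [Nat.add_mul_mod_self_left, Nat.mod_eq_of_lt ha, Nat.mod_eq_of_lt hc] at h1
  subst h1
  have hq : 0 < q := by omega
  exact ⟨rfl, Nat.eq_of_mul_eq_mul_left hq (by omega)⟩

/-- As `(j, t)` varies, `j + 1 + t * q` takes each value at most once. A function tied with `c ≥ 1`
others at `x` lies on `c + 1` levels, hence it is an event for at most `2 * (c + 1) ≤ 4 * c` of the
strips. -/
lemma card_levels_le (f : ι → ℝ → ℝ) (q T : ℕ) (x : ℝ) (i : ι) :
    ((Finset.range q ×ˢ Finset.range T).filter fun p : ℕ × ℕ =>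
      i ∈ events f q (p.1 + 1 + p.2 * q) x).card ≤
      4 * (Finset.univ.filter fun j => j ≠ i ∧ f j x = f i x).card := by
  by_cases htie : ∃ j, j ≠ i ∧ f j x = f i x
  · have hpos : 0 < (Finset.univ.filter fun j => j ≠ i ∧ f j x = f i x).card := by
      obtain ⟨j, hj⟩ := htie
      exact Finset.card_pos.2 ⟨j, by simpa using hj⟩
    have heq : cntEq f x (f i x) ≤ (Finset.univ.filter fun j => j ≠ i ∧ f j x = f i x).card + 1 := by
      have : (Finset.univ.filter fun j => f j x = f i x) ⊆
          insert i (Finset.univ.filter fun j => j ≠ i ∧ f j x = f i x) := by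
        intro j hj
        simp only [Finset.mem_insert, Finset.mem_filter, Finset.mem_univ, true_and] at hj ⊢
        tauto
      exact (Finset.card_le_card this).trans (Finset.card_insert_le _ _)
    have hIoc : (Finset.Ioc (cntLt f x (f i x)) (cntLe f x (f i x))).card = cntEq f x (f i x) := by
      rw [Nat.card_Ioc, ← cntLt_add_cntEq]; omega
    have h1 : ((Finset.range q ×ˢ Finset.range T).filter fun p : ℕ × ℕ =>
        OnLevel f (p.1 + 1 + p.2 * q) x (f i x)).card ≤ cntEq f x (f i x) := by
      rw [← hIoc]
      apply Finset.card_le_card_of_injOn (fun p => p.1 + 1 + p.2 * q)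
      · intro p hp
        have := (Finset.mem_filter.1 hp).2
        exact Finset.mem_coe.2 (Finset.mem_Ioc.2 this)
      · intro p hp p' hp' h
        have a1 := Finset.mem_product.1 (Finset.mem_filter.1 hp).1
        have a2 := Finset.mem_product.1 (Finset.mem_filter.1 hp').1
        have := mul_add_injOn (Finset.mem_range.1 a1.1) (Finset.mem_range.1 a2.1) h
        exact Prod.ext this.1 this.2
    have h2 : ((Finset.range q ×ˢ Finset.range T).filter fun p : ℕ × ℕ =>
        OnLevel f (p.1 + 1 + p.2 * q - q) x (f i x)).card ≤ cntEq f x (f i x) := by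
      rw [← hIoc]
      apply Finset.card_le_card_of_injOn (fun p => p.1 + 1 + p.2 * q - q)
      · intro p hp
        have := (Finset.mem_filter.1 hp).2
        exact Finset.mem_coe.2 (Finset.mem_Ioc.2 this)
      · intro p hp p' hp' h
        have a1 := Finset.mem_product.1 (Finset.mem_filter.1 hp).1
        have a2 := Finset.mem_product.1 (Finset.mem_filter.1 hp').1
        have b1 := (Finset.mem_filter.1 hp).2.1
        have b2 := (Finset.mem_filter.1 hp').2.1
        simp only at h
        have := mul_add_injOn (Finset.mem_range.1 a1.1) (Finset.mem_range.1 a2.1)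
          (b := p.2) (d := p'.2) (by omega)
        exact Prod.ext this.1 this.2
    have h3 : ((Finset.range q ×ˢ Finset.range T).filter fun p : ℕ × ℕ =>
        i ∈ events f q (p.1 + 1 + p.2 * q) x) ⊆
        ((Finset.range q ×ˢ Finset.range T).filter fun p : ℕ × ℕ =>
          OnLevel f (p.1 + 1 + p.2 * q) x (f i x)) ∪
        ((Finset.range q ×ˢ Finset.range T).filter fun p : ℕ × ℕ =>
          OnLevel f (p.1 + 1 + p.2 * q - q) x (f i x)) := by
      rw [← Finset.filter_or]
      intro p hp
      rw [Finset.mem_filter] at hp ⊢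
      exact ⟨hp.1, (Finset.mem_filter.1 hp.2).2.2⟩
    have h4 := (Finset.card_le_card h3).trans (Finset.card_union_le _ _)
    omega
  · rw [Finset.filter_false_of_mem]
    · simp
    · intro p _ hp
      exact htie (Finset.mem_filter.1 hp).2.1

/-- Averaging over the offset `j < q`: for some `j`, the strips bounded above by the levels
`j + 1 + t * q` have few events in total. -/
lemma exists_offset (f : ι → ℝ → ℝ) {s q : ℕ} (hq : 0 < q) (T : ℕ)
    (A : ι → ι → Finset ℝ) (hA : ∀ i j, i ≠ j → (A i j).card ≤ s)
    (hA' : ∀ i j, i ≠ j → ∀ x, f i x = f j x → x ∈ A i j) (B : Finset ℝ) :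
    ∃ j < q, q * ∑ t ∈ Finset.range T, ∑ x ∈ B, (events f q (j + 1 + t * q) x).card ≤
      4 * s * Fintype.card ι ^ 2 := by
  have hpairs : ∑ x ∈ B, ∑ i, (Finset.univ.filter fun j => j ≠ i ∧ f j x = f i x).card ≤
      s * Fintype.card ι ^ 2 := by
    simp only [Finset.card_filter]
    rw [Finset.sum_comm]
    have : ∀ i : ι, ∑ x ∈ B, ∑ j, (if j ≠ i ∧ f j x = f i x then 1 else 0) ≤ ∑ j : ι, s := by
      intro i
      rw [Finset.sum_comm]
      refine Finset.sum_le_sum fun j _ => ?_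
      rw [← Finset.card_filter]
      by_cases hij : j = i
      · simp [hij]
      · refine le_trans (Finset.card_le_card fun x hx => ?_) (hA j i hij)
        exact hA' j i hij x (Finset.mem_filter.1 hx).2.2
    refine (Finset.sum_le_sum fun i _ => this i).trans ?_
    simp only [Finset.sum_const, Finset.card_univ, smul_eq_mul]
    exact le_of_eq (by ring)
  have htotal : ∑ j ∈ Finset.range q, ∑ t ∈ Finset.range T, ∑ x ∈ B,
      (events f q (j + 1 + t * q) x).card ≤ 4 * s * Fintype.card ι ^ 2 := by
    rw [← Finset.sum_product' (f := fun j t => ∑ x ∈ B, (events f q (j + 1 + t * q) x).card),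
      Finset.sum_comm]
    have : ∀ x ∈ B, ∑ p ∈ Finset.range q ×ˢ Finset.range T,
        (events f q (p.1 + 1 + p.2 * q) x).card ≤
        4 * ∑ i, (Finset.univ.filter fun j => j ≠ i ∧ f j x = f i x).card := by
      intro x _
      have e : ∀ p : ℕ × ℕ, (events f q (p.1 + 1 + p.2 * q) x).card =
          ∑ i, if i ∈ events f q (p.1 + 1 + p.2 * q) x then 1 else 0 := by
        intro p
        simp
      simp only [e]
      rw [Finset.sum_comm, Finset.mul_sum]
      refine Finset.sum_le_sum fun i _ => ?_
      rw [← Finset.card_filter]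
      exact card_levels_le f q T x i
    refine (Finset.sum_le_sum this).trans ?_
    rw [← Finset.mul_sum]
    calc _ ≤ 4 * (s * Fintype.card ι ^ 2) := Nat.mul_le_mul_left _ hpairs
      _ = _ := by ring
  obtain ⟨j, hj, h⟩ := Finset.exists_le_of_sum_le (s := Finset.range q)
    (f := fun j => q * ∑ t ∈ Finset.range T, ∑ x ∈ B, (events f q (j + 1 + t * q) x).card)
    (g := fun _ => 4 * s * Fintype.card ι ^ 2) ⟨0, by simpa using hq⟩ (by
      rw [← Finset.mul_sum]
      simp only [Finset.sum_const, Finset.card_range, smul_eq_mul]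
      exact Nat.mul_le_mul_left _ htotal)
  exact ⟨j, by simpa using hj, h⟩

/-- The left-hand quotient computes the index `t` of the strip `[k - q, k)`, with `k = j + 1 + t * q`,
containing `n`. For `t = 0` the strip is `[0, j + 1)`, in agreement with the truncated
subtraction. -/
lemma stripIndex_eq_iff {q j n t : ℕ} (hj : j < q) :
    (n + (q - 1 - j)) / q = t ↔ j + 1 + t * q - q ≤ n ∧ n < j + 1 + t * q := by
  rw [Nat.div_eq_iff (by omega)]
  omega

/-- With fewer than `q` events at `x`, the levels `k - q` and `k` are separated over `x`: otherwise
more than `q` functions would be tied at the point of level `k`. -/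
lemma sub_le_cntLt {f : ι → ℝ → ℝ} {q k : ℕ} {x y : ℝ}
    (hE : (events f q k x).card < q) (h : OnLevel f k x y) : k - q ≤ cntLt f x y := by
  by_contra hlt
  rw [not_le] at hlt
  have h1 := cntLt_add_cntEq f x y
  have h2 := h.2
  have hcard : q + 1 ≤ cntEq f x y := by omega
  have : (Finset.univ.filter fun i => f i x = y) ⊆ events f q k x := by
    intro i hi
    have hiy := (Finset.mem_filter.1 hi).2
    refine Finset.mem_filter.2 ⟨Finset.mem_univ _, ?_, Or.inl (by rwa [hiy])⟩
    obtain ⟨j, hj, hji⟩ := Finset.exists_mem_ne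
      (s := Finset.univ.filter fun i => f i x = y) (by unfold cntEq at hcard; omega) i
    exact ⟨j, hji, by rw [hiy]; exact (Finset.mem_filter.1 hj).2⟩
  have := Finset.card_le_card this
  unfold cntEq at hcard
  omega

/-- With fewer than `q` events at `x`, the open strip between the levels `k - q` and `k` has a point
over `x`. -/
lemma exists_mem_strip {f : ι → ℝ → ℝ} (hf : ∀ i, Continuous (f i)) {q k : ℕ}
    (hk : 1 ≤ k) (hkm : k - q ≤ Fintype.card ι) {x : ℝ} (hE : (events f q k x).card < q) :
    ∃ y, k - q ≤ cntLt f x y ∧ cntLe f x y < k := by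
  by_cases hkc : k ≤ Fintype.card ι
  · obtain ⟨L, -, hL⟩ := exists_level hf hk hkc
    have h1 := sub_le_cntLt hE (hL x)
    have hc : Continuous fun y : ℝ => (x, y) := by fun_prop
    have hev : ∀ᶠ y in nhds (L x), k - q ≤ cntLt f x y :=
      ((isOpen_le_cntLt hf (k - q)).preimage hc).mem_nhds h1
    have hev' : ∀ᶠ y in nhdsWithin (L x) (Set.Iio (L x)), k - q ≤ cntLt f x y :=
      hev.filter_mono nhdsWithin_le_nhds
    obtain ⟨y, hy, hy'⟩ := (hev'.and self_mem_nhdsWithin).exists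
    exact ⟨y, hy, (cntLe_le_cntLt f x hy').trans_lt (hL x).1⟩
  · obtain ⟨y, hy⟩ := (Set.finite_range fun i => f i x).bddAbove
    refine ⟨y + 1, ?_, (cntLe_le_card f x _).trans_lt (not_le.1 hkc)⟩
    have : cntLt f x (y + 1) = Fintype.card ι := by
      unfold cntLt
      rw [Finset.filter_true_of_mem, Finset.card_univ]
      intro i _
      have := hy ⟨i, rfl⟩
      simp only at this
      linarith
    omega

/-- Cutting lemma for the graphs of continuous functions any two of which coincide at most `s` times:
a labelling of the plane with few labels and connected fibers, each crossed by at most `2 * q`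
graphs. Labels `(true, t, c)` stand for the part of the `t`-th open strip over the points at
position `c` relative to the walls of that strip, and labels `(false, t, c)` for the corresponding
part of the level bounding the strip from above. -/
lemma exists_labelling {f : ι → ℝ → ℝ} (hf : ∀ i, Continuous (f i)) {s q : ℕ} (hq : 0 < q)
    (hs : ∀ i j, i ≠ j → ∃ A : Finset ℝ, A.card ≤ s ∧ ∀ x, f i x = f j x → x ∈ A) :
    ∃ (Λ : Finset (Bool × ℕ × ℕ)) (lab : ℝ × ℝ → Bool × ℕ × ℕ), (∀ p, lab p ∈ Λ) ∧
      q ^ 2 * Λ.card ≤ 16 * s * Fintype.card ι ^ 2 + 2 * q * Fintype.card ι + 4 * q ^ 2 ∧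
      ∀ l, IsPreconnected {p | lab p = l} ∧
        (Finset.univ.filter fun i => (∃ p, lab p = l ∧ f i p.1 = p.2) ∧
          ∃ p, lab p = l ∧ f i p.1 ≠ p.2).card ≤ 2 * q := by
  have hs' : ∀ i j, ∃ A : Finset ℝ, i ≠ j → A.card ≤ s ∧ ∀ x, f i x = f j x → x ∈ A := by
    intro i j
    by_cases h : i = j
    · exact ⟨∅, fun h' => absurd h h'⟩
    · obtain ⟨A, hA⟩ := hs i j h
      exact ⟨A, fun _ => hA⟩
  choose A hA using hs'
  let B : Finset ℝ := Finset.univ.biUnion fun p : ι × ι => A p.1 p.2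
  have hevB : ∀ k x i, i ∈ events f q k x → x ∈ B := by
    intro k x i hi
    obtain ⟨j, hji, hj⟩ := (Finset.mem_filter.1 hi).2.1
    exact Finset.mem_biUnion.2 ⟨(j, i), Finset.mem_univ _, (hA j i hji).2 x hj⟩
  set m := Fintype.card ι with hm
  -- The strips with index `t < T` cover the plane.
  let T := m / q + 2
  obtain ⟨j, hjq, hj⟩ := exists_offset f hq T A (fun i j h => (hA i j h).1)
    (fun i j h => (hA i j h).2) B
  let k : ℕ → ℕ := fun t => j + 1 + t * q
  choose W hWcard hW using fun t => exists_walls B (fun x => (events f q (k t) x).card) hq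
  let tt : ℝ × ℝ → ℕ := fun p => (cntLt f p.1 p.2 + (q - 1 - j)) / q
  let lab : ℝ × ℝ → Bool × ℕ × ℕ := fun p =>
    (decide (cntLe f p.1 p.2 < k (tt p)), tt p, loc (W (tt p)) p.1)
  have hW1 : ∀ t x, x ∉ W t → (events f q (k t) x).card < q := by
    intro t x hx
    have := hW t {x} Set.ordConnected_singleton (by simpa using hx)
    rcases (events f q (k t) x).eq_empty_or_nonempty with h | ⟨i, hi⟩
    · simpa [h] using hq
    · refine lt_of_le_of_lt ?_ this
      exact Finset.single_le_sum (f := fun x => (events f q (k t) x).card)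
        (fun _ _ => Nat.zero_le _) (Finset.mem_filter.2 ⟨hevB _ _ _ hi, rfl⟩)
  have htt : ∀ p t, tt p = t ↔ k t - q ≤ cntLt f p.1 p.2 ∧ cntLt f p.1 p.2 < k t :=
    fun p t => stripIndex_eq_iff hjq
  have hTrue : ∀ t c p, lab p = (true, t, c) ↔ p.1 ∈ {x | loc (W t) x = c} ∧
      p ∈ {p : ℝ × ℝ | k t - q ≤ cntLt f p.1 p.2} ∩ {p | cntLe f p.1 p.2 < k t} := by
    intro t c p
    have h0 := cntLt_le_cntLe f p.1 p.2
    simp only [lab, Prod.mk.injEq, decide_eq_true_eq, Set.mem_ofPred_eq, Set.mem_inter_iff]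
    constructor
    · rintro ⟨h1, h2, h3⟩
      rw [h2] at h1 h3
      exact ⟨h3, ((htt p t).1 h2).1, h1⟩
    · rintro ⟨h1, h2, h3⟩
      have := (htt p t).2 ⟨h2, by omega⟩
      rw [this]
      exact ⟨h3, rfl, h1⟩
  have hFalse : ∀ t c p, lab p = (false, t, c) ↔ p.1 ∈ {x | loc (W t) x = c} ∧
      k t - q ≤ cntLt f p.1 p.2 ∧ OnLevel f (k t) p.1 p.2 := by
    intro t c p
    simp only [lab, Prod.mk.injEq, decide_eq_false_iff_not, not_lt, Set.mem_ofPred_eq, OnLevel]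
    constructor
    · rintro ⟨h1, h2, h3⟩
      rw [h2] at h1 h3
      exact ⟨h3, ((htt p t).1 h2).1, ((htt p t).1 h2).2, h1⟩
    · rintro ⟨h1, h2, h3, h4⟩
      have := (htt p t).2 ⟨h2, h3⟩
      rw [this]
      exact ⟨h4, rfl, h1⟩
  refine ⟨(Finset.range T).biUnion fun t =>
      Finset.univ ×ˢ ({t} ×ˢ Finset.range (2 * (W t).card + 1)), lab, ?_, ?_, ?_⟩
  · intro p
    have htT : tt p < T := by
      have h1 : cntLt f p.1 p.2 ≤ m := (cntLt_le_cntLe f _ _).trans (cntLe_le_card f _ _)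
      have : tt p ≤ (m + q) / q := Nat.div_le_div_right (by omega)
      rw [Nat.add_div_right _ hq] at this
      simp only [T]; omega
    refine Finset.mem_biUnion.2 ⟨tt p, Finset.mem_range.2 htT, ?_⟩
    have := loc_le (W (tt p)) p.1
    simp only [lab, Finset.mem_product, Finset.mem_univ, Finset.mem_singleton, Finset.mem_range,
      true_and]
    omega
  · have h1 : ((Finset.range T).biUnion fun t => (Finset.univ : Finset Bool) ×ˢ
        (({t} : Finset ℕ) ×ˢ Finset.range (2 * (W t).card + 1))).card ≤
        ∑ t ∈ Finset.range T, (4 * (W t).card + 2) := by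
      refine Finset.card_biUnion_le.trans (Finset.sum_le_sum fun t _ => ?_)
      simp only [Finset.card_product, Finset.card_univ, Fintype.card_bool, Finset.card_singleton,
        Finset.card_range]
      omega
    have h2 : (∑ t ∈ Finset.range T, (W t).card) * q ≤
        ∑ t ∈ Finset.range T, ∑ x ∈ B, (events f q (j + 1 + t * q) x).card := by
      rw [Finset.sum_mul]
      exact Finset.sum_le_sum fun t _ => hWcard t
    have h3 : q ^ 2 * ∑ t ∈ Finset.range T, (W t).card ≤ 4 * s * m ^ 2 := by
      refine le_trans ?_ hj
      calc _ = q * ((∑ t ∈ Finset.range T, (W t).card) * q) := by ring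
        _ ≤ _ := Nat.mul_le_mul_left _ h2
    have h4 : ∑ t ∈ Finset.range T, (4 * (W t).card + 2) =
        4 * ∑ t ∈ Finset.range T, (W t).card + 2 * T := by
      rw [Finset.sum_add_distrib, ← Finset.mul_sum]
      simp [mul_comm]
    have h5 : q * (m / q) ≤ m := Nat.mul_div_le m q
    calc _ ≤ q ^ 2 * (4 * ∑ t ∈ Finset.range T, (W t).card + 2 * T) :=
          Nat.mul_le_mul_left _ (h1.trans h4.le)
      _ = 4 * (q ^ 2 * ∑ t ∈ Finset.range T, (W t).card) + 2 * q * (q * (m / q)) + 4 * q ^ 2 := by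
          simp only [T]; ring
      _ ≤ 4 * (4 * s * m ^ 2) + 2 * q * m + 4 * q ^ 2 := by gcongr
      _ = _ := by ring
  · rintro ⟨b, t, c⟩
    set X : Set ℝ := {x | loc (W t) x = c} with hXdef
    have hXoc : X.OrdConnected := ordConnected_loc (W t) c
    have hk1 : 1 ≤ k t := by simp only [k]; omega
    -- Either the base is a single wall, or it avoids all walls.
    have hX : X.Subsingleton ∨ ∀ x ∈ X, x ∉ W t := by
      by_cases h : ∃ x ∈ X, x ∈ W t
      · left
        obtain ⟨x, hx, hxW⟩ := h
        have : ∀ z ∈ X, x = z := fun z hz => loc_eq_of_mem hxW (hx.trans hz.symm)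
        intro z hz z' hz'
        rw [← this z hz, ← this z' hz']
      · right
        push Not at h
        exact h
    -- The functions with an event over `X`.
    let EX : Finset ι := (B.filter (· ∈ X)).biUnion fun x => events f q (k t) x
    have hEX : (∀ x ∈ X, x ∉ W t) → EX.card ≤ q := fun h =>
      Finset.card_biUnion_le.trans (le_of_eq_of_le
        (Finset.sum_congr (by ext; simp) fun _ _ => rfl) (hW t X hXoc h).le)
    have hno : ∀ i, i ∉ EX → ∀ x ∈ X, ∀ k', (k' = k t ∨ k' = k t - q) →
        OnLevel f k' x (f i x) → ∀ j, j ≠ i → f j x ≠ f i x := by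
      intro i hi x hx k' hk' hon j hji hj
      have hmem : i ∈ events f q (k t) x := by
        refine Finset.mem_filter.2 ⟨Finset.mem_univ _, ⟨j, hji, hj⟩, ?_⟩
        rcases hk' with rfl | rfl
        · exact Or.inl hon
        · exact Or.inr hon
      exact hi (Finset.mem_biUnion.2 ⟨x, Finset.mem_filter.2 ⟨hevB _ _ _ hmem, hx⟩, hmem⟩)
    cases b
    · simp only [hFalse]
      rw [← hXdef]
      constructor
      · rcases hX with hX | hX
        · apply Set.Subsingleton.isPreconnected
          rintro ⟨x, y⟩ ⟨hx, -, hy⟩ ⟨x', y'⟩ ⟨hx', -, hy'⟩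
          simp only at hx hx' hy hy'
          obtain rfl := hX hx hx'
          rw [hy.unique hy']
        · by_cases hkm : k t ≤ m
          · obtain ⟨L, hLc, hL⟩ := exists_level hf hk1 hkm
            have : {p : ℝ × ℝ | p.1 ∈ X ∧ k t - q ≤ cntLt f p.1 p.2 ∧ OnLevel f (k t) p.1 p.2} =
                (fun x => (x, L x)) '' X := by
              ext ⟨x, y⟩
              simp only [Set.mem_ofPred_eq, Set.mem_image, Prod.mk.injEq]
              constructor
              · rintro ⟨hx, -, hy⟩
                exact ⟨x, hx, rfl, (hL x).unique hy⟩
              · rintro ⟨x', hx', rfl, rfl⟩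
                exact ⟨hx', sub_le_cntLt (hW1 t _ (hX _ hx')) (hL _), hL _⟩
            rw [this]
            exact hXoc.isPreconnected.image _ (continuous_id.prodMk hLc).continuousOn
          · have : {p : ℝ × ℝ | p.1 ∈ X ∧ k t - q ≤ cntLt f p.1 p.2 ∧
                OnLevel f (k t) p.1 p.2} = ∅ := by
              ext p
              simp only [Set.mem_ofPred_eq, Set.mem_empty_iff_false, iff_false]
              rintro ⟨-, -, h⟩
              exact hkm (h.2.trans (cntLe_le_card f _ _))
            rw [this]
            exact isPreconnected_empty
      · rcases hX with hX | hX
        · rw [Finset.filter_false_of_mem]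
          · simp
          · rintro i - ⟨⟨p, ⟨hp, -, hpl⟩, hip⟩, p', ⟨hp', -, hpl'⟩, hip'⟩
            have hpp := hX hp hp'
            rw [← hpp] at hpl' hip'
            exact hip' (hip.trans (hpl.unique hpl'))
        · refine le_trans (Finset.card_le_card fun i hi => ?_) ((hEX hX).trans (by omega))
          obtain ⟨-, ⟨p, ⟨hp, -, hpl⟩, hip⟩, p', ⟨hp', -, hpl'⟩, hip'⟩ := Finset.mem_filter.1 hi
          by_contra hcon
          have hside := side_const hf hXoc.isPreconnected (k t) i
            (fun x hx => hno i hcon x hx _ (Or.inl rfl)) hp hp'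
          rw [← hip] at hpl
          refine hip' (OnLevel.unique (k := k t) ⟨?_, ?_⟩ hpl')
          · exact not_le.1 fun h => not_le.2 hpl.1 (hside.1.2 h)
          · exact not_lt.1 fun h => not_lt.2 hpl.2 (hside.2.2 h)
    · simp only [hTrue]
      rw [← hXdef]
      set O : Set (ℝ × ℝ) := {p : ℝ × ℝ | k t - q ≤ cntLt f p.1 p.2} ∩
        {p | cntLe f p.1 p.2 < k t} with hOdef
      have hO : IsOpen O := (isOpen_le_cntLt hf _).inter (isOpen_cntLe_lt hf _)
      have hmemO : ∀ x y, (x, y) ∈ O ↔ k t - q ≤ cntLt f x y ∧ cntLe f x y < k t :=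
        fun x y => Iff.rfl
      constructor
      · have hpre : IsPreconnected {x ∈ X | ∃ y, (x, y) ∈ O} := by
          rcases hX with hX | hX
          · exact (hX.anti fun x hx => hx.1).isPreconnected
          · by_cases hkm : k t - q ≤ m
            · have : {x ∈ X | ∃ y, (x, y) ∈ O} = X := by
                ext x
                simp only [Set.mem_ofPred_eq, and_iff_left_iff_imp]
                intro hx
                exact exists_mem_strip hf hk1 hkm (hW1 t x (hX x hx))
              rw [this]
              exact hXoc.isPreconnected
            · have : {x ∈ X | ∃ y, (x, y) ∈ O} = ∅ := by
                ext x
                simp only [Set.mem_ofPred_eq, Set.mem_empty_iff_false, iff_false]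
                rintro ⟨-, y, hy⟩
                exact hkm (((hmemO x y).1 hy).1.trans
                  ((cntLt_le_cntLe f _ _).trans (cntLe_le_card f _ _)))
              rw [this]
              exact isPreconnected_empty
        have := isPreconnected_region hpre hO (fun x hx => hx.2) (by
          intro x _
          constructor
          intro y hy y' hy' z hz
          have h1 := (hmemO x y).1 hy
          have h2 := (hmemO x y').1 hy'
          exact (hmemO x z).2 ⟨h1.1.trans (cntLt_mono f x hz.1),
            (cntLe_mono f x hz.2).trans_lt h2.2⟩)
        convert this using 1
        ext p
        simp only [Set.mem_ofPred_eq]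
        constructor
        · rintro ⟨h1, h2⟩
          exact ⟨⟨h1, p.2, h2⟩, h2⟩
        · rintro ⟨⟨h1, -⟩, h2⟩
          exact ⟨h1, h2⟩
      · by_cases hne : ∃ x, x ∈ X
        swap
        · rw [Finset.filter_false_of_mem]
          · simp
          · rintro i - ⟨⟨p, ⟨hp, -⟩, -⟩, -⟩
            exact hne ⟨_, hp⟩
        obtain ⟨x₀, hx₀⟩ := hne
        have hstrip := card_strip_le f (k t - q) (k t) x₀
        rcases hX with hX | hX
        · refine le_trans (Finset.card_le_card fun i hi => ?_) (hstrip.trans (by omega))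
          obtain ⟨-, ⟨⟨x, y⟩, ⟨hp, hpO⟩, hip⟩, -⟩ := Finset.mem_filter.1 hi
          simp only at hp hip
          obtain rfl := hX hp hx₀
          refine Finset.mem_filter.2 ⟨Finset.mem_univ _, ?_⟩
          rw [hip]
          exact (hmemO x y).1 hpO
        · refine le_trans (Finset.card_le_card (t := (Finset.univ.filter fun i =>
            k t - q ≤ cntLt f x₀ (f i x₀) ∧ cntLe f x₀ (f i x₀) < k t) ∪ EX) fun i hi => ?_)
            ((Finset.card_union_le _ _).trans ?_)
          · obtain ⟨-, ⟨⟨x, y⟩, ⟨hp, hpO⟩, hip⟩, -⟩ := Finset.mem_filter.1 hi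
            simp only at hp hip
            rw [Finset.mem_union, Finset.mem_filter]
            by_cases hiE : i ∈ EX
            · exact Or.inr hiE
            left
            have hpO := (hmemO x y).1 hpO
            rw [← hip] at hpO
            have h1 := side_const hf hXoc.isPreconnected (k t) i
              (fun x hx => hno i hiE x hx _ (Or.inl rfl)) hp hx₀
            have h2 := side_const hf hXoc.isPreconnected (k t - q) i
              (fun x hx => hno i hiE x hx _ (Or.inr rfl)) hp hx₀
            exact ⟨Finset.mem_univ _, h2.1.1 hpO.1, h1.2.1 hpO.2⟩
          · have := hEX hX
            omega

end Cutting

/-! ### Unit circles as pairs of graphs -/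

section Arcs

lemma quadratic_zeros (u v w : ℝ) (h : u ≠ 0 ∨ v ≠ 0) :
    ∃ A : Finset ℝ, A.card ≤ 2 ∧ ∀ x, u * x ^ 2 + v * x + w = 0 → x ∈ A := by
  let p : Polynomial ℝ := Polynomial.C u * Polynomial.X ^ 2 + Polynomial.C v * Polynomial.X +
    Polynomial.C w
  have hp : p ≠ 0 := by
    intro h0
    have h2 : p.coeff 2 = u := by simp [p]
    have h1 : p.coeff 1 = v := by simp [p, Polynomial.coeff_X_pow, Polynomial.coeff_C]
    rw [h0] at h1 h2
    simp at h1 h2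
    rcases h with h | h
    · exact h h2.symm
    · exact h h1.symm
  refine ⟨p.roots.toFinset, ?_, ?_⟩
  · exact (Multiset.toFinset_card_le _).trans ((Polynomial.card_roots' p).trans
      Polynomial.natDegree_quadratic_le)
  · intro x hx
    rw [Multiset.mem_toFinset, Polynomial.mem_roots hp]
    simpa [p, Polynomial.IsRoot] using hx

/-- The curves `{(x, y) | P x y}` and `{(x, y) | Q x y}` meet over at most two abscissas. -/
def FewCommon (P Q : ℝ → ℝ → Prop) : Prop :=
  ∃ A : Finset ℝ, A.card ≤ 2 ∧ ∀ x y, P x y → Q x y → x ∈ A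

lemma fewCommon_line_line {α₁ β₁ α₂ β₂ : ℝ} (h : α₁ ≠ α₂) :
    FewCommon (fun x y => y = α₁ * x + β₁) (fun x y => y = α₂ * x + β₂) := by
  obtain ⟨A, hA, h⟩ := quadratic_zeros 0 (α₁ - α₂) (β₁ - β₂) (Or.inr (sub_ne_zero.2 h))
  exact ⟨A, hA, fun x y h1 h2 => h x (by linear_combination h2 - h1)⟩

lemma fewCommon_circle_line (a b α β : ℝ) :
    FewCommon (fun x y => (x - a) ^ 2 + (y - b) ^ 2 = 1) (fun x y => y = α * x + β) := by
  obtain ⟨A, hA, h⟩ := quadratic_zeros (1 + α ^ 2) (2 * α * (β - b) - 2 * a)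
    ((β - b) ^ 2 + a ^ 2 - 1) (Or.inl (by positivity))
  refine ⟨A, hA, fun x y h1 h2 => h x ?_⟩
  subst h2
  linear_combination h1

/-- Common points of two circles lie on their radical axis, which is vertical exactly when the
centers have the same ordinate. -/
lemma fewCommon_circle_circle {a₁ b₁ a₂ b₂ : ℝ} (h : a₁ ≠ a₂ ∨ b₁ ≠ b₂) :
    FewCommon (fun x y => (x - a₁) ^ 2 + (y - b₁) ^ 2 = 1)
      (fun x y => (x - a₂) ^ 2 + (y - b₂) ^ 2 = 1) := by
  by_cases hb : b₁ = b₂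
  · have ha : a₁ ≠ a₂ := h.resolve_right (not_not.2 hb)
    obtain ⟨A, hA, h⟩ := quadratic_zeros 0 (2 * (a₂ - a₁)) (a₁ ^ 2 - a₂ ^ 2)
      (Or.inr (mul_ne_zero two_ne_zero (sub_ne_zero.2 ha.symm)))
    refine ⟨A, hA, fun x y h1 h2 => h x ?_⟩
    subst hb
    linear_combination h1 - h2
  · have hb' : b₂ - b₁ ≠ 0 := sub_ne_zero.2 (Ne.symm hb)
    obtain ⟨A, hA, h⟩ := fewCommon_circle_line a₁ b₁ (-(a₂ - a₁) / (b₂ - b₁))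
      ((a₂ ^ 2 + b₂ ^ 2 - a₁ ^ 2 - b₁ ^ 2) / (2 * (b₂ - b₁)))
    refine ⟨A, hA, fun x y h1 h2 => h x y h1 ?_⟩
    field_simp
    linear_combination h1 - h2

/-- For `ε = 1` (`ε = -1`), the upper (lower) arc of the unit circle centered at `(a, b)`, extended
to a function on the whole line by rays leaving the two endpoints of the horizontal diameter with
slopes `±s`. For `s > 0` the two extended arcs of a circle only meet at these endpoints. -/
noncomputable def arc (a b s ε : ℝ) (x : ℝ) : ℝ :=
  b + ε * (√(1 - (x - a) ^ 2) + s * max 0 (|x - a| - 1))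

lemma continuous_arc (a b s ε : ℝ) : Continuous (arc a b s ε) := by
  unfold arc
  fun_prop

/-- An extended arc is contained in the union of a circle and two lines. -/
lemma arc_cases (a b s : ℝ) {ε : ℝ} (hε : ε = 1 ∨ ε = -1) {x y : ℝ} (h : arc a b s ε x = y) :
    (x - a) ^ 2 + (y - b) ^ 2 = 1 ∨ y = (ε * s) * x + (b - ε * s * (a + 1)) ∨
      y = (-(ε * s)) * x + (b + ε * s * (a - 1)) := by
  have hε2 : ε ^ 2 = 1 := by rcases hε with rfl | rfl <;> norm_num
  subst h
  unfold arc
  by_cases hx : |x - a| ≤ 1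
  · left
    have h1 : 0 ≤ 1 - (x - a) ^ 2 := by
      have := abs_le.1 hx; nlinarith
    rw [max_eq_left (by linarith)]
    have := Real.sq_sqrt h1
    linear_combination ε ^ 2 * this + (1 - (x - a) ^ 2) * hε2
  · right
    rw [not_le] at hx
    have h1 : 1 - (x - a) ^ 2 ≤ 0 := by
      have := (one_lt_sq_iff_one_lt_abs (x - a)).2 hx; linarith
    rw [Real.sqrt_eq_zero_of_nonpos h1, max_eq_right (by linarith)]
    rcases abs_cases (x - a) with h | h
    · left; rw [h.1]; ring
    · right; rw [h.1]; ring

/-- Extended arcs of distinct unit circles meet over at most `9 * 2` abscissas: each is covered by a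
circle and two lines, and since the slopes `±s₁`, `±s₂` are distinct, each of the nine pairs of
pieces contributes at most two. -/
lemma arc_coincidences {a₁ b₁ s₁ ε₁ a₂ b₂ s₂ ε₂ : ℝ} (hε₁ : ε₁ = 1 ∨ ε₁ = -1)
    (hε₂ : ε₂ = 1 ∨ ε₂ = -1) (hs₁ : 0 < s₁) (hs₂ : 0 < s₂) (hs : s₁ ≠ s₂)
    (hc : a₁ ≠ a₂ ∨ b₁ ≠ b₂) :
    ∃ A : Finset ℝ, A.card ≤ 18 ∧ ∀ x, arc a₁ b₁ s₁ ε₁ x = arc a₂ b₂ s₂ ε₂ x → x ∈ A := by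
  have n1 : ε₁ * s₁ ≠ ε₂ * s₂ := by
    rcases hε₁ with rfl | rfl <;> rcases hε₂ with rfl | rfl <;> intro h <;>
      first | linarith | (apply hs; linarith)
  have n2 : ε₁ * s₁ ≠ -(ε₂ * s₂) := by
    rcases hε₁ with rfl | rfl <;> rcases hε₂ with rfl | rfl <;> intro h <;>
      first | linarith | (apply hs; linarith)
  have n3 : -(ε₁ * s₁) ≠ ε₂ * s₂ := fun h => n2 (by linarith)
  have n4 : -(ε₁ * s₁) ≠ -(ε₂ * s₂) := fun h => n1 (by linarith)
  obtain ⟨A1, c1, h1⟩ := fewCommon_circle_circle hc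
  obtain ⟨A2, c2, h2⟩ := fewCommon_circle_line a₁ b₁ (ε₂ * s₂) (b₂ - ε₂ * s₂ * (a₂ + 1))
  obtain ⟨A3, c3, h3⟩ := fewCommon_circle_line a₁ b₁ (-(ε₂ * s₂)) (b₂ + ε₂ * s₂ * (a₂ - 1))
  obtain ⟨A4, c4, h4⟩ := fewCommon_circle_line a₂ b₂ (ε₁ * s₁) (b₁ - ε₁ * s₁ * (a₁ + 1))
  obtain ⟨A5, c5, h5⟩ := fewCommon_circle_line a₂ b₂ (-(ε₁ * s₁)) (b₁ + ε₁ * s₁ * (a₁ - 1))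
  obtain ⟨A6, c6, h6⟩ := fewCommon_line_line (β₁ := b₁ - ε₁ * s₁ * (a₁ + 1))
    (β₂ := b₂ - ε₂ * s₂ * (a₂ + 1)) n1
  obtain ⟨A7, c7, h7⟩ := fewCommon_line_line (β₁ := b₁ - ε₁ * s₁ * (a₁ + 1))
    (β₂ := b₂ + ε₂ * s₂ * (a₂ - 1)) n2
  obtain ⟨A8, c8, h8⟩ := fewCommon_line_line (β₁ := b₁ + ε₁ * s₁ * (a₁ - 1))
    (β₂ := b₂ - ε₂ * s₂ * (a₂ + 1)) n3
  obtain ⟨A9, c9, h9⟩ := fewCommon_line_line (β₁ := b₁ + ε₁ * s₁ * (a₁ - 1))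
    (β₂ := b₂ + ε₂ * s₂ * (a₂ - 1)) n4
  refine ⟨A1 ∪ (A2 ∪ (A3 ∪ (A4 ∪ (A5 ∪ (A6 ∪ (A7 ∪ (A8 ∪ A9))))))), ?_, ?_⟩
  · have d1 := Finset.card_union_le A1 (A2 ∪ (A3 ∪ (A4 ∪ (A5 ∪ (A6 ∪ (A7 ∪ (A8 ∪ A9)))))))
    have d2 := Finset.card_union_le A2 (A3 ∪ (A4 ∪ (A5 ∪ (A6 ∪ (A7 ∪ (A8 ∪ A9))))))
    have d3 := Finset.card_union_le A3 (A4 ∪ (A5 ∪ (A6 ∪ (A7 ∪ (A8 ∪ A9)))))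
    have d4 := Finset.card_union_le A4 (A5 ∪ (A6 ∪ (A7 ∪ (A8 ∪ A9))))
    have d5 := Finset.card_union_le A5 (A6 ∪ (A7 ∪ (A8 ∪ A9)))
    have d6 := Finset.card_union_le A6 (A7 ∪ (A8 ∪ A9))
    have d7 := Finset.card_union_le A7 (A8 ∪ A9)
    have d8 := Finset.card_union_le A8 A9
    omega
  · intro x hx
    simp only [Finset.mem_union]
    rcases arc_cases a₁ b₁ s₁ hε₁ hx with e | e | e <;>
      rcases arc_cases a₂ b₂ s₂ hε₂ (x := x) rfl with e' | e' | e'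
    · simp [h1 _ _ e e']
    · simp [h2 _ _ e e']
    · simp [h3 _ _ e e']
    · simp [h4 _ _ e' e]
    · simp [h6 _ _ e e']
    · simp [h7 _ _ e e']
    · simp [h5 _ _ e' e]
    · simp [h8 _ _ e e']
    · simp [h9 _ _ e e']

lemma arc_eq_opposite_iff {a b s ε x : ℝ} (hs : 0 < s) (hε : ε ≠ 0) :
    arc a b s ε x = arc a b s (-ε) x ↔ x = a - 1 ∨ x = a + 1 := by
  unfold arc
  have h1 := Real.sqrt_nonneg (1 - (x - a) ^ 2)
  have h2 : 0 ≤ s * max 0 (|x - a| - 1) := mul_nonneg hs.le (le_max_left _ _)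
  constructor
  · intro h
    have h3 : ε * (√(1 - (x - a) ^ 2) + s * max 0 (|x - a| - 1)) = 0 := by linarith
    have h4 := (mul_eq_zero.1 h3).resolve_left hε
    have h5 : √(1 - (x - a) ^ 2) = 0 := by linarith
    have h6 : s * max 0 (|x - a| - 1) = 0 := by linarith
    have h7 := (mul_eq_zero.1 h6).resolve_left hs.ne'
    have h8 := Real.sqrt_eq_zero'.1 h5
    have h9 : |x - a| ≤ 1 := by
      have := le_max_right 0 (|x - a| - 1); linarith
    have h10 := abs_le.1 h9
    have h11 : (x - (a - 1)) * (x - (a + 1)) = 0 := by nlinarith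
    rcases mul_eq_zero.1 h11 with h | h
    · left; linarith
    · right; linarith
  · rintro (rfl | rfl) <;> simp

lemma exists_arc_of_mem_circle {a b x y : ℝ} (s : ℝ) (h : (x - a) ^ 2 + (y - b) ^ 2 = 1) :
    |x - a| ≤ 1 ∧ (arc a b s 1 x = y ∨ arc a b s (-1) x = y) := by
  have hx : |x - a| ≤ 1 := by
    rw [← sq_le_one_iff_abs_le_one]; nlinarith [sq_nonneg (y - b)]
  refine ⟨hx, ?_⟩
  unfold arc
  rw [max_eq_left (by linarith), show 1 - (x - a) ^ 2 = (y - b) ^ 2 by linarith,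
    Real.sqrt_sq_eq_abs]
  rcases abs_cases (y - b) with h | h
  · left; rw [h.1]; ring
  · right; rw [h.1]; ring

lemma circle_of_arc {a b s ε x y : ℝ} (hε : ε = 1 ∨ ε = -1) (hx : |x - a| ≤ 1)
    (h : arc a b s ε x = y) : (x - a) ^ 2 + (y - b) ^ 2 = 1 := by
  have hε2 : ε ^ 2 = 1 := by rcases hε with rfl | rfl <;> norm_num
  subst h
  unfold arc
  have h1 : 0 ≤ 1 - (x - a) ^ 2 := by
    have := abs_le.1 hx; nlinarith
  rw [max_eq_left (by linarith)]
  have := Real.sq_sqrt h1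
  linear_combination ε ^ 2 * this + (1 - (x - a) ^ 2) * hε2

/-- If a unit circle crosses a connected set `D`, then so does one of its two extended arcs. The case
to consider is that `D` lies entirely on one extended arc: it then contains points inside and
outside the vertical strip of the circle, hence an endpoint of the horizontal diameter, and there
the opposite arc enters `D`. -/
lemma exists_arc_crosses {a b s : ℝ} (hs : 0 < s) {D : Set (ℝ × ℝ)} (hD : IsPreconnected D)
    {p p' : ℝ × ℝ} (hp : p ∈ D) (hpc : (p.1 - a) ^ 2 + (p.2 - b) ^ 2 = 1)
    (hp' : p' ∈ D) (hpc' : (p'.1 - a) ^ 2 + (p'.2 - b) ^ 2 ≠ 1) :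
    ∃ ε : ℝ, (ε = 1 ∨ ε = -1) ∧ (∃ z ∈ D, arc a b s ε z.1 = z.2) ∧
      ∃ z ∈ D, arc a b s ε z.1 ≠ z.2 := by
  obtain ⟨hx, harc⟩ := exists_arc_of_mem_circle s hpc
  obtain ⟨ε, hε, hεp⟩ : ∃ ε : ℝ, (ε = 1 ∨ ε = -1) ∧ arc a b s ε p.1 = p.2 := by
    rcases harc with h | h
    · exact ⟨1, Or.inl rfl, h⟩
    · exact ⟨-1, Or.inr rfl, h⟩
  have hε0 : ε ≠ 0 := by rcases hε with rfl | rfl <;> norm_num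
  by_cases hall : ∃ z ∈ D, arc a b s ε z.1 ≠ z.2
  · exact ⟨ε, hε, ⟨p, hp, hεp⟩, hall⟩
  push Not at hall
  have hx' : 1 < |p'.1 - a| := by
    by_contra h
    exact hpc' (circle_of_arc hε (not_lt.1 h) (hall p' hp'))
  have himg : IsPreconnected ((fun z : ℝ × ℝ => |z.1 - a|) '' D) :=
    hD.image _ (by fun_prop)
  obtain ⟨z, hz, hz1⟩ : (1 : ℝ) ∈ (fun z : ℝ × ℝ => |z.1 - a|) '' D :=
    himg.ordConnected.out ⟨p, hp, rfl⟩ ⟨p', hp', rfl⟩ ⟨hx, hx'.le⟩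
  simp only at hz1
  refine ⟨-ε, by rcases hε with rfl | rfl <;> norm_num, ⟨z, hz, ?_⟩, ⟨p', hp', ?_⟩⟩
  · rw [← hall z hz]
    symm
    rw [arc_eq_opposite_iff hs hε0]
    rcases (abs_eq zero_le_one).1 hz1 with h | h
    · right; linarith
    · left; linarith
  · rw [← hall p' hp']
    intro h
    rcases (arc_eq_opposite_iff hs hε0).1 h.symm with h | h <;> rw [h] at hx' <;> simp at hx'

end Arcs

/-! ### The cutting lemma for unit circles -/

lemma mem_unitCircle_iff (x c : EuclideanSpace ℝ (Fin 2)) :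
    ‖x - c‖ = 1 ↔ (x 0 - c 0) ^ 2 + (x 1 - c 1) ^ 2 = 1 := by
  rw [EuclideanSpace.norm_eq, Real.sqrt_eq_one, Fin.sum_univ_two]
  simp

/-- A labelling of the plane with few labels and connected fibers, each crossed by at most `2 * q`
of the circles. -/
lemma exists_circle_labelling (S : Finset (Set (EuclideanSpace ℝ (Fin 2))))
    (hS : ∀ σ ∈ S, IsUnitCircle σ) {q : ℕ} (hq : 0 < q) :
    ∃ (Λ : Finset (Bool × ℕ × ℕ)) (lab : EuclideanSpace ℝ (Fin 2) → Bool × ℕ × ℕ),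
      (∀ p, lab p ∈ Λ) ∧
      q ^ 2 * Λ.card ≤ 1152 * S.card ^ 2 + 4 * q * S.card + 4 * q ^ 2 ∧
      ∀ l, IsPreconnected {p | lab p = l} ∧
        (S.filter fun σ => Crosses σ {p | lab p = l}).card ≤ 2 * q := by
  choose c hc using fun σ : S => hS σ.1 σ.2
  -- Distinct positive slopes for the rays extending the arcs of distinct circles.
  let slope : S → ℝ := fun σ => ((S.equivFin σ : ℕ) : ℝ) + 1
  have hslope : ∀ σ, 0 < slope σ := fun σ => by positivity
  have hinj : ∀ σ τ, slope σ = slope τ → σ = τ := by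
    intro σ τ h
    have h1 : ((S.equivFin σ : ℕ) : ℝ) = ((S.equivFin τ : ℕ) : ℝ) := by
      simpa [slope] using h
    exact S.equivFin.injective (Fin.ext (by exact_mod_cast h1))
  let sgn : Bool → ℝ := fun β => if β then 1 else -1
  have hsgn : ∀ β, sgn β = 1 ∨ sgn β = -1 := by intro β; cases β <;> simp [sgn]
  let f : S × Bool → ℝ → ℝ := fun i => arc (c i.1 0) (c i.1 1) (slope i.1) (sgn i.2)
  have hf : ∀ i, Continuous (f i) := fun i => continuous_arc _ _ _ _
  have hcommon : ∀ i j, i ≠ j →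
      ∃ A : Finset ℝ, A.card ≤ 18 ∧ ∀ x, f i x = f j x → x ∈ A := by
    rintro ⟨σ, β⟩ ⟨τ, γ⟩ hij
    by_cases hστ : σ = τ
    · subst hστ
      have hβγ : sgn γ = -sgn β := by
        cases β <;> cases γ <;> simp [sgn] at hij ⊢
      refine ⟨{c σ 0 - 1, c σ 0 + 1}, Finset.card_le_two.trans (by norm_num), fun x hx => ?_⟩
      simp only [f, hβγ] at hx
      have hne : sgn β ≠ 0 := by rcases hsgn β with h | h <;> rw [h] <;> norm_num
      simpa using (arc_eq_opposite_iff (hslope σ) hne).1 hx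
    · refine arc_coincidences (hsgn β) (hsgn γ) (hslope σ) (hslope τ)
        (fun h => hστ (hinj _ _ h)) ?_
      by_contra! h
      apply hστ
      apply Subtype.ext
      rw [hc σ, hc τ]
      ext x
      simp only [Set.mem_ofPred_eq, mem_unitCircle_iff, h.1, h.2]
  obtain ⟨Λ, lab, hΛ, hcard, hlab⟩ := exists_labelling hf hq hcommon
  refine ⟨Λ, fun p => lab (p 0, p 1), fun p => hΛ _, ?_, fun l => ⟨?_, ?_⟩⟩
  · simp only [Fintype.card_prod, Fintype.card_coe, Fintype.card_bool] at hcard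
    nlinarith [hcard]
  · have heq : {p : EuclideanSpace ℝ (Fin 2) | lab (p 0, p 1) = l} =
        (fun z : ℝ × ℝ => (!₂[z.1, z.2] : EuclideanSpace ℝ (Fin 2))) '' {p | lab p = l} := by
      ext p
      constructor
      · intro hp
        refine ⟨(p 0, p 1), hp, ?_⟩
        ext i
        fin_cases i <;> rfl
      · rintro ⟨z, hz, rfl⟩
        simpa using hz
    rw [heq]
    refine (hlab l).1.image _ (Continuous.continuousOn ?_)
    apply (PiLp.continuous_toLp 2 _).comp
    refine continuous_pi fun i => ?_
    fin_cases i
    · exact continuous_fst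
    · exact continuous_snd
  · refine le_trans ?_ (hlab l).2
    -- Each crossing circle is the first component of some crossing extended arc.
    refine le_trans (Finset.card_le_card (t := Finset.image
      (fun i : S × Bool => i.1.1) _) ?_) Finset.card_image_le
    intro σ hσ
    obtain ⟨hσS, ⟨p, hpσ, hpl⟩, hnot⟩ := Finset.mem_filter.1 hσ
    obtain ⟨p', hp'l, hp'σ⟩ := Set.not_subset.1 hnot
    have hcσ := hc ⟨σ, hσS⟩
    simp only at hcσ
    rw [hcσ, Set.mem_ofPred_eq, mem_unitCircle_iff] at hpσ hp'σ
    obtain ⟨ε, hε, hz, hz'⟩ := exists_arc_crosses (hslope ⟨σ, hσS⟩) (hlab l).1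
      (p := (p 0, p 1)) (p' := (p' 0, p' 1)) hpl hpσ hp'l hp'σ
    obtain ⟨β, rfl⟩ : ∃ β, ε = sgn β := by
      rcases hε with rfl | rfl
      · exact ⟨true, by simp [sgn]⟩
      · exact ⟨false, by simp [sgn]⟩
    exact Finset.mem_image.2 ⟨(⟨σ, hσS⟩, β), Finset.mem_filter.2 ⟨Finset.mem_univ _, hz, hz'⟩, rfl⟩

/-- **Cutting lemma for unit circles in the plane (existence part).** -/
theorem unit_circle_cutting_lemma :
    ∃ C : ℝ, ∀ S : Finset (Set (EuclideanSpace ℝ (Fin 2))),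
      1 ≤ S.card → (∀ σ ∈ S, IsUnitCircle σ) →
      ∀ r : ℝ, 1 ≤ r → r ≤ (S.card : ℝ) →
      ∃ F : Finset (Set (EuclideanSpace ℝ (Fin 2))),
        (F.card : ℝ) ≤ C * r ^ 2 ∧
        (∀ Δ ∈ F, IsConnected Δ) ∧
        (∀ Δ₁ ∈ F, ∀ Δ₂ ∈ F, Δ₁ ≠ Δ₂ → Disjoint Δ₁ Δ₂) ∧
        ⋃₀ (F : Set (Set (EuclideanSpace ℝ (Fin 2)))) = Set.univ ∧
        ∀ Δ ∈ F, ((S.filter fun σ => Crosses σ Δ).card : ℝ) ≤ C * (S.card : ℝ) / r := by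
  refine ⟨1160, fun S hS1 hS r hr1 hrn => ?_⟩
  have hr0 : 0 < r := by linarith
  set n : ℝ := (S.card : ℝ) with hn
  have hnr : 1 ≤ n / r := (one_le_div hr0).2 hrn
  set q : ℕ := ⌈n / r⌉₊ with hqdef
  have hq1 : n / r ≤ q := Nat.le_ceil _
  have hq2 : (q : ℝ) ≤ 2 * (n / r) := by
    have := Nat.ceil_lt_add_one (show 0 ≤ n / r by linarith)
    rw [← hqdef] at this
    linarith
  have hq0 : 0 < q := Nat.ceil_pos.2 (by linarith)
  obtain ⟨Λ, lab, hΛ, hcard, hlab⟩ := exists_circle_labelling S hS hq0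
  refine ⟨(Λ.image fun l => {p | lab p = l}).filter Set.Nonempty, ?_, ?_, ?_, ?_, ?_⟩
  · have hF : (((Λ.image fun l => {p | lab p = l}).filter Set.Nonempty).card : ℝ) ≤ Λ.card := by
      exact_mod_cast (Finset.card_filter_le _ _).trans Finset.card_image_le
    refine hF.trans ?_
    have hqR : (0 : ℝ) < q := by exact_mod_cast hq0
    have hcardR : (q : ℝ) ^ 2 * Λ.card ≤ 1152 * n ^ 2 + 4 * q * n + 4 * q ^ 2 := by
      rw [hn]; exact_mod_cast hcard
    have hnq : n ≤ q * r := (div_le_iff₀ hr0).1 hq1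
    have hn0 : 0 ≤ n := by linarith
    have h1 : n ^ 2 ≤ (q : ℝ) ^ 2 * r ^ 2 := by
      rw [← mul_pow]; exact pow_le_pow_left₀ hn0 hnq 2
    have h2 : (q : ℝ) * n ≤ q ^ 2 * r := by nlinarith
    have h3 : r ≤ r ^ 2 := by nlinarith
    have h4 : (q : ℝ) ^ 2 * r ≤ q ^ 2 * r ^ 2 := by gcongr
    have h5 : (q : ℝ) ^ 2 * 1 ≤ q ^ 2 * r ^ 2 := by
      gcongr
      linarith
    have h6 : (q : ℝ) ^ 2 * Λ.card ≤ q ^ 2 * (1160 * r ^ 2) := by linarith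
    exact le_of_mul_le_mul_left h6 (by positivity)
  · intro Δ hΔ
    obtain ⟨hΔ, hne⟩ := Finset.mem_filter.1 hΔ
    obtain ⟨l, -, rfl⟩ := Finset.mem_image.1 hΔ
    exact ⟨hne, (hlab l).1⟩
  · intro Δ₁ h₁ Δ₂ h₂ hne
    obtain ⟨l₁, -, rfl⟩ := Finset.mem_image.1 (Finset.mem_filter.1 h₁).1
    obtain ⟨l₂, -, rfl⟩ := Finset.mem_image.1 (Finset.mem_filter.1 h₂).1
    rw [Set.disjoint_left]
    intro p hp₁ hp₂
    exact hne (by rw [← hp₁.symm.trans hp₂])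
  · refine Set.eq_univ_of_forall fun p => ⟨{p' | lab p' = lab p}, ?_, rfl⟩
    exact Finset.mem_coe.2 (Finset.mem_filter.2 ⟨Finset.mem_image.2 ⟨_, hΛ p, rfl⟩, p, rfl⟩)
  · intro Δ hΔ
    obtain ⟨l, -, rfl⟩ := Finset.mem_image.1 (Finset.mem_filter.1 hΔ).1
    have h1 : ((S.filter fun σ => Crosses σ {p | lab p = l}).card : ℝ) ≤ 2 * q := by
      exact_mod_cast (hlab l).2
    rw [mul_div_assoc]
    linarith
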